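/- arXiv:2502.05412 — 2 statements merged into one kernel-verified Lean document; each statement's English description precedes it below -/
import Mathlib

section
/- Let 𝒜 = (A_1,…,A_m) be an m-tuple of n×n complex matrices. Then 𝒜 is scalable (for every ε > 0 there exist g,h ∈ GL(n,ℂ) with ‖T_{gᴴ𝒜h}(I) − I‖₂² + ‖T*_{gᴴ𝒜h}(I) − I‖₂² < ε², where ‖·‖₂ is the Frobenius norm) if and only if dim 𝒜U ≥ dim U for every complex linear subspace U ≤ ℂ^n. (By the Fortin–Reutenauer formula, the subspace condition is equivalent to nc-rank(A_1x_1+⋯+A_mx_m) = n.) -/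
noncomputable section
open scoped Classical
open Matrix
open scoped ComplexOrder

/-- The completely positive operator `T_𝒜(X) = ∑ k, A k * X * (A k)ᴴ`. -/
def Tcp {m n : ℕ} (A : Fin m → Matrix (Fin n) (Fin n) ℂ)
    (X : Matrix (Fin n) (Fin n) ℂ) : Matrix (Fin n) (Fin n) ℂ :=
  ∑ k, A k * X * (A k)ᴴ

/-- The dual operator `T*_𝒜(X) = ∑ k, (A k)ᴴ * X * A k`. -/
def TcpStar {m n : ℕ} (A : Fin m → Matrix (Fin n) (Fin n) ℂ)
    (X : Matrix (Fin n) (Fin n) ℂ) : Matrix (Fin n) (Fin n) ℂ :=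
  ∑ k, (A k)ᴴ * X * A k

/-- Squared Frobenius norm of a complex matrix. -/
def frobSq {n : ℕ} (X : Matrix (Fin n) (Fin n) ℂ) : ℝ :=
  ∑ i, ∑ j, ‖X i j‖ ^ 2

/-- `𝒜U = ∑ k, A_k U`. -/
def ASpan {m : ℕ} {ι : Type*} [Fintype ι] [DecidableEq ι]
    (A : Fin m → Matrix ι ι ℂ) (U : Submodule ℂ (ι → ℂ)) : Submodule ℂ (ι → ℂ) :=
  ⨆ k, U.map (A k).mulVecLin

def DimCond {m n : ℕ} (A : Fin m → Matrix (Fin n) (Fin n) ℂ) : Prop :=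
  ∀ U : Submodule ℂ (Fin n → ℂ), Module.finrank ℂ U ≤ Module.finrank ℂ (ASpan A U)

lemma dimCond_scale {m n : ℕ} (A : Fin m → Matrix (Fin n) (Fin n) ℂ)
    (g g' h h' : Matrix (Fin n) (Fin n) ℂ) (hg : g' * g = 1) (hh : h' * h = 1)
    (hA : DimCond A) : DimCond (fun k => g * A k * h) := by
  intro U
  have e1 : U = (U.map h.mulVecLin).map h'.mulVecLin := by
    rw [← Submodule.map_comp, ← Matrix.mulVecLin_mul, hh, Matrix.mulVecLin_one, Submodule.map_id]
  have e2 : ASpan A (U.map h.mulVecLin) = (ASpan (fun k => g * A k * h) U).map g'.mulVecLin := by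
    unfold ASpan
    rw [Submodule.map_iSup]
    refine iSup_congr fun k => ?_
    rw [← Submodule.map_comp, ← Submodule.map_comp, ← Matrix.mulVecLin_mul, ← Matrix.mulVecLin_mul]
    congr 2
    rw [← mul_assoc, ← mul_assoc, hg, one_mul]
  calc Module.finrank ℂ U ≤ Module.finrank ℂ (U.map h.mulVecLin) := by
        conv_lhs => rw [e1]
        exact Submodule.finrank_map_le _ _
    _ ≤ _ := hA _
    _ ≤ _ := by rw [e2]; exact Submodule.finrank_map_le _ _

lemma norm_toEuclideanLin_le {n : ℕ} (M : Matrix (Fin n) (Fin n) ℂ)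
    (x : EuclideanSpace ℂ (Fin n)) :
    ‖Matrix.toEuclideanLin M x‖ ^ 2 ≤ frobSq M * ‖x‖ ^ 2 := by
  rw [EuclideanSpace.norm_sq_eq, EuclideanSpace.norm_sq_eq, frobSq, Finset.sum_mul]
  refine Finset.sum_le_sum fun i _ => ?_
  have h1 : ‖(Matrix.toEuclideanLin M x) i‖ ≤ ∑ j, ‖M i j‖ * ‖x j‖ := by
    have : (Matrix.toEuclideanLin M x) i = ∑ j, M i j * x j := by
      simp [Matrix.toLpLin_apply, Matrix.mulVec, dotProduct]
    rw [this]
    refine (norm_sum_le _ _).trans (le_of_eq ?_)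
    simp
  calc _ ≤ (∑ j, ‖M i j‖ * ‖x j‖) ^ 2 := by gcongr
    _ ≤ _ := Finset.sum_mul_sq_le_sq_mul_sq _ _ _

lemma quad_eq {m n : ℕ} (B : Fin m → Matrix (Fin n) (Fin n) ℂ) (x : EuclideanSpace ℂ (Fin n)) :
    inner ℂ x (Matrix.toEuclideanLin (TcpStar B 1) x)
      = ((∑ k, ‖Matrix.toEuclideanLin (B k) x‖ ^ 2 : ℝ) : ℂ) := by
  unfold TcpStar
  rw [map_sum, LinearMap.sum_apply, inner_sum]
  push_cast
  refine Finset.sum_congr rfl fun k _ => ?_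
  have : Matrix.toEuclideanLin ((B k)ᴴ * 1 * B k) x
      = Matrix.toEuclideanLin (B k)ᴴ (Matrix.toEuclideanLin (B k) x) := by
    simp [Matrix.toLpLin_apply]
  rw [this, Matrix.toEuclideanLin_conjTranspose_eq_adjoint, LinearMap.adjoint_inner_right,
    inner_self_eq_norm_sq_to_K]
  simp

lemma quad_bound {m n : ℕ} (B : Fin m → Matrix (Fin n) (Fin n) ℂ) (x : EuclideanSpace ℂ (Fin n))
    (hx : ‖x‖ = 1) (ε : ℝ) (hε : 0 ≤ ε) (hB : frobSq (TcpStar B 1 - 1) ≤ ε ^ 2) :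
    |∑ k, ‖Matrix.toEuclideanLin (B k) x‖ ^ 2 - 1| ≤ ε := by
  have h1 : inner ℂ x (Matrix.toEuclideanLin (TcpStar B 1 - 1) x)
      = ((∑ k, ‖Matrix.toEuclideanLin (B k) x‖ ^ 2 - 1 : ℝ) : ℂ) := by
    rw [map_sub, LinearMap.sub_apply, inner_sub_right, quad_eq]
    have : Matrix.toEuclideanLin (1 : Matrix (Fin n) (Fin n) ℂ) x = x := by
      simp [Matrix.toLpLin_apply]
    rw [this, inner_self_eq_norm_sq_to_K, hx]
    simp
  have h2 := norm_inner_le_norm (𝕜 := ℂ) x (Matrix.toEuclideanLin (TcpStar B 1 - 1) x)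
  rw [h1, Complex.norm_real, Real.norm_eq_abs, hx, one_mul] at h2
  have h3 := norm_toEuclideanLin_le (TcpStar B 1 - 1) x
  rw [hx] at h3
  refine h2.trans ?_
  refine abs_le_of_sq_le_sq' (by linarith) hε |>.2

lemma near_ds_dim {m n : ℕ} (B : Fin m → Matrix (Fin n) (Fin n) ℂ) (ε : ℝ) (hε : 0 ≤ ε)
    (h1 : frobSq (TcpStar B 1 - 1) ≤ ε ^ 2)
    (h2 : frobSq (TcpStar (fun k => (B k)ᴴ) 1 - 1) ≤ ε ^ 2)
    (U W : Submodule ℂ (EuclideanSpace ℂ (Fin n)))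
    (hUW : ∀ k, ∀ x ∈ U, Matrix.toEuclideanLin (B k) x ∈ W) :
    (Module.finrank ℂ U : ℝ) * (1 - ε) ≤ Module.finrank ℂ W * (1 + ε) := by
  let v := stdOrthonormalBasis ℂ U
  let w := stdOrthonormalBasis ℂ W
  have hv : Orthonormal ℂ (fun j => (v j : EuclideanSpace ℂ (Fin n))) :=
    v.orthonormal.comp_linearIsometry U.subtypeₗᵢ
  have hw : Orthonormal ℂ (fun j => (w j : EuclideanSpace ℂ (Fin n))) :=
    w.orthonormal.comp_linearIsometry W.subtypeₗᵢ
  have a1 : ∀ j, 1 - ε ≤ ∑ k, ‖Matrix.toEuclideanLin (B k) (v j)‖ ^ 2 := fun j => by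
    have := quad_bound B (v j) (hv.1 j) ε hε h1
    rw [abs_le] at this; linarith
  have a2 : ∀ i, ∑ k, ‖Matrix.toEuclideanLin (B k)ᴴ (w i)‖ ^ 2 ≤ 1 + ε := fun j => by
    have := quad_bound (fun k => (B k)ᴴ) (w j) (hw.1 j) ε hε h2
    rw [abs_le] at this; linarith
  calc (Module.finrank ℂ U : ℝ) * (1 - ε) = ∑ j : Fin (Module.finrank ℂ U), (1 - ε) := by simp; ring
    _ ≤ ∑ j, ∑ k, ‖Matrix.toEuclideanLin (B k) (v j)‖ ^ 2 := Finset.sum_le_sum fun j _ => a1 j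
    _ = ∑ j, ∑ k, ∑ i, ‖inner ℂ (w i : EuclideanSpace ℂ (Fin n))
          (Matrix.toEuclideanLin (B k) (v j))‖ ^ 2 := by
        refine Finset.sum_congr rfl fun j _ => Finset.sum_congr rfl fun k _ => ?_
        have := w.sum_sq_norm_inner_right ⟨_, hUW k (v j) (v j).2⟩
        simpa using this.symm
    _ = ∑ i, ∑ k, ∑ j, ‖inner ℂ (v j : EuclideanSpace ℂ (Fin n))
          (Matrix.toEuclideanLin (B k)ᴴ (w i))‖ ^ 2 := by
        rw [Finset.sum_comm]
        conv_rhs => rw [Finset.sum_comm]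
        refine Finset.sum_congr rfl fun k _ => ?_
        rw [Finset.sum_comm]
        refine Finset.sum_congr rfl fun i _ => Finset.sum_congr rfl fun j _ => ?_
        rw [Matrix.toEuclideanLin_conjTranspose_eq_adjoint, LinearMap.adjoint_inner_right,
          norm_inner_symm]
    _ ≤ ∑ i, ∑ k, ‖Matrix.toEuclideanLin (B k)ᴴ (w i)‖ ^ 2 :=
        Finset.sum_le_sum fun i _ => Finset.sum_le_sum fun k _ => hv.sum_inner_products_le _
    _ ≤ ∑ i : Fin (Module.finrank ℂ W), (1 + ε) := Finset.sum_le_sum fun j _ => a2 j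
    _ = _ := by simp; ring

lemma frobSq_nonneg {n : ℕ} (X : Matrix (Fin n) (Fin n) ℂ) : 0 ≤ frobSq X := by
  unfold frobSq; positivity

lemma near_ds_dimCond {m n : ℕ} (B : Fin m → Matrix (Fin n) (Fin n) ℂ)
    (hB : frobSq (Tcp B 1 - 1) + frobSq (TcpStar B 1 - 1) < (1 / (2 * n + 1) : ℝ) ^ 2) :
    DimCond B := by
  intro U
  have hT : Tcp B 1 = TcpStar (fun k => (B k)ᴴ) 1 := by simp [Tcp, TcpStar]
  rw [hT] at hB
  let e := (WithLp.linearEquiv 2 ℂ (Fin n → ℂ)).symm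
  have key := near_ds_dim B (1 / (2 * n + 1) : ℝ) (by positivity)
    (by linarith [frobSq_nonneg (TcpStar (fun k => (B k)ᴴ) 1 - 1)])
    (by linarith [frobSq_nonneg (TcpStar B 1 - 1)])
    (U.map e.toLinearMap) ((ASpan B U).map e.toLinearMap) (by
      rintro k _ ⟨x, hx, rfl⟩
      refine ⟨B k *ᵥ x, ?_, ?_⟩
      · exact (le_iSup (fun k => U.map (B k).mulVecLin) k) ⟨x, hx, rfl⟩
      · simp [e, Matrix.toLpLin_apply])
  rw [LinearEquiv.finrank_map_eq, LinearEquiv.finrank_map_eq] at key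
  by_contra hlt
  push Not at hlt
  have hU : Module.finrank ℂ U ≤ n := by simpa using Submodule.finrank_le U
  set d := Module.finrank ℂ U
  set r := Module.finrank ℂ (ASpan B U)
  have h1 : (r : ℝ) + 1 ≤ d := by exact_mod_cast hlt
  have h2 : (d : ℝ) ≤ n := by exact_mod_cast hU
  have h3 : (0 : ℝ) < 2 * n + 1 := by positivity
  have h4 : (d - r : ℝ) * (2 * n + 1) ≤ d + r := by
    have := mul_le_mul_of_nonneg_right key h3.le
    field_simp at this
    linarith
  nlinarith

lemma hall_pos {m n : ℕ} (C : Fin m → Matrix (Fin n) (Fin n) ℂ) (hC : DimCond C) :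
    0 < ∑ σ : Equiv.Perm (Fin n), ∏ j, ∑ k, ‖C k (σ j) j‖ ^ 2 := by
  let t : Fin n → Finset (Fin n) := fun j => Finset.univ.filter fun i => ∃ k, C k i j ≠ 0
  have hall : ∀ s : Finset (Fin n), s.card ≤ (s.biUnion t).card := by
    intro s
    let e : Fin n → (Fin n → ℂ) := fun i => Pi.single i 1
    have he : LinearIndependent ℂ e := by
      have := (Pi.basisFun ℂ (Fin n)).linearIndependent
      convert this using 1
      ext i; simp [e]
    let f : s → (Fin n → ℂ) := fun i => e i
    have hf : LinearIndependent ℂ f := he.comp _ Subtype.val_injective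
    have h1 := hC (Submodule.span ℂ (Set.range f))
    rw [finrank_span_eq_card hf, Fintype.card_coe] at h1
    refine h1.trans ?_
    let f' : {i // i ∈ s.biUnion t} → (Fin n → ℂ) := fun i => e i
    have h2 : ASpan C (Submodule.span ℂ (Set.range f)) ≤ Submodule.span ℂ (Set.range f') := by
      unfold ASpan
      refine iSup_le fun k => ?_
      rw [Submodule.map_span, Submodule.span_le]
      rintro _ ⟨_, ⟨j, rfl⟩, rfl⟩
      have : (C k).mulVecLin (f j) = ∑ i, C k i j • e i := by
        ext i
        simp [f, e, Finset.sum_apply, Pi.single_apply]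
      rw [this]
      refine Submodule.sum_mem _ fun i _ => ?_
      by_cases hz : C k i j = 0
      · rw [hz, zero_smul]; exact Submodule.zero_mem _
      · refine Submodule.smul_mem _ _ (Submodule.subset_span ⟨⟨i, ?_⟩, rfl⟩)
        rw [Finset.mem_biUnion]
        exact ⟨j, j.2, by simp only [t, Finset.mem_filter, Finset.mem_univ, true_and]; exact ⟨k, hz⟩⟩
    refine (Submodule.finrank_mono h2).trans ?_
    have := finrank_range_le_card (R := ℂ) f'
    rwa [Fintype.card_coe] at this
  obtain ⟨f, hf, hft⟩ := (Finset.all_card_le_biUnion_card_iff_exists_injective t).1 hall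
  refine Finset.sum_pos' (fun σ _ => by positivity) ⟨Equiv.ofBijective f (Finite.injective_iff_bijective.1 hf), Finset.mem_univ _, ?_⟩
  refine Finset.prod_pos fun j _ => ?_
  have := hft j
  simp only [t, Finset.mem_filter, Finset.mem_univ, true_and] at this
  obtain ⟨k, hk⟩ := this
  refine Finset.sum_pos' (fun k _ => by positivity) ⟨k, Finset.mem_univ _, ?_⟩
  have : 0 < ‖C k (f j) j‖ := norm_pos_iff.2 hk
  simp only [Equiv.ofBijective_apply]
  positivity

lemma isCompact_unitary (n : ℕ) :
    IsCompact {U : Matrix (Fin n) (Fin n) ℂ | U ∈ Matrix.unitaryGroup (Fin n) ℂ} := by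
  have hK : IsCompact (Set.pi Set.univ fun _ : Fin n => Set.pi Set.univ fun _ : Fin n =>
      Metric.closedBall (0 : ℂ) 1) :=
    isCompact_univ_pi fun _ => isCompact_univ_pi fun _ => isCompact_closedBall _ _
  refine IsCompact.of_isClosed_subset hK ?_ ?_
  · have : {U : Matrix (Fin n) (Fin n) ℂ | U ∈ Matrix.unitaryGroup (Fin n) ℂ}
        = {U | U * Uᴴ = 1} := by
      ext U; simp [Matrix.mem_unitaryGroup_iff, Matrix.star_eq_conjTranspose]
    rw [this]
    exact isClosed_eq (by fun_prop) continuous_const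
  · intro U hU i _ j _
    simpa using entry_norm_bound_of_unitary hU i j

lemma unif_bound {m n : ℕ} (A : Fin m → Matrix (Fin n) (Fin n) ℂ) (hA : DimCond A) :
    ∃ c > (0 : ℝ), ∀ U ∈ Matrix.unitaryGroup (Fin n) ℂ, ∀ V ∈ Matrix.unitaryGroup (Fin n) ℂ,
      c ≤ ∑ σ : Equiv.Perm (Fin n), ∏ j, ∑ k, ‖(Uᴴ * A k * V) (σ j) j‖ ^ 2 := by
  have hc := (isCompact_unitary n).prod (isCompact_unitary n)
  obtain ⟨⟨U₀, V₀⟩, ⟨hU₀, hV₀⟩, hmin⟩ := hc.exists_isMinOn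
    (f := fun p : Matrix (Fin n) (Fin n) ℂ × Matrix (Fin n) (Fin n) ℂ =>
      ∑ σ : Equiv.Perm (Fin n), ∏ j, ∑ k, ‖(p.1ᴴ * A k * p.2) (σ j) j‖ ^ 2)
    ⟨(1, 1), ⟨one_mem (Matrix.unitaryGroup (Fin n) ℂ), one_mem (Matrix.unitaryGroup (Fin n) ℂ)⟩⟩ (by
      apply Continuous.continuousOn
      have : ∀ k i j, Continuous fun p : Matrix (Fin n) (Fin n) ℂ × Matrix (Fin n) (Fin n) ℂ =>
          (p.1ᴴ * A k * p.2) i j := fun k i j => Continuous.matrix_elem (by fun_prop) i j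
      fun_prop)
  refine ⟨_, hall_pos (fun k => U₀ᴴ * A k * V₀) (dimCond_scale A _ U₀ _ V₀ᴴ ?_ ?_ hA), ?_⟩
  · exact Matrix.mem_unitaryGroup_iff.1 hU₀
  · exact Matrix.mem_unitaryGroup_iff'.1 hV₀
  · intro U hU V hV
    exact hmin (a := (U, V)) ⟨hU, hV⟩

def FF {m n : ℕ} (A : Fin m → Matrix (Fin n) (Fin n) ℂ) (P Q : Matrix (Fin n) (Fin n) ℂ) : ℝ :=
  (P * Tcp A Q).trace.re

lemma trace_diag {n : ℕ} (d e : Fin n → ℝ) (C : Matrix (Fin n) (Fin n) ℂ) :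
    (Matrix.diagonal (fun i => (d i : ℂ)) * (C * Matrix.diagonal (fun i => (e i : ℂ)) * Cᴴ)).trace
      = ((∑ i, ∑ j, d i * e j * ‖C i j‖ ^ 2 : ℝ) : ℂ) := by
  simp only [Matrix.trace, Matrix.diag, Matrix.diagonal_mul]
  push_cast
  refine Finset.sum_congr rfl fun i _ => ?_
  rw [Matrix.mul_apply, Finset.mul_sum]
  refine Finset.sum_congr rfl fun j _ => ?_
  rw [Matrix.mul_diagonal, Matrix.conjTranspose_apply]
  have : C i j * star (C i j) = (‖C i j‖ : ℂ) ^ 2 := Complex.mul_conj' _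
  rw [← this]; ring

lemma spectral' {n : ℕ} {P : Matrix (Fin n) (Fin n) ℂ} (hP : P.IsHermitian) :
    ∃ U ∈ Matrix.unitaryGroup (Fin n) ℂ,
      P = U * Matrix.diagonal (fun i => (hP.eigenvalues i : ℂ)) * Uᴴ := by
  refine ⟨hP.eigenvectorUnitary, hP.eigenvectorUnitary.2, ?_⟩
  conv_lhs => rw [hP.spectral_theorem]
  rw [Unitary.conjStarAlgAut_apply]
  rfl

lemma FF_expand {m n : ℕ} (A : Fin m → Matrix (Fin n) (Fin n) ℂ)
    (U V : Matrix (Fin n) (Fin n) ℂ) (d e : Fin n → ℝ) :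
    FF A (U * Matrix.diagonal (fun i => (d i : ℂ)) * Uᴴ)
      (V * Matrix.diagonal (fun i => (e i : ℂ)) * Vᴴ)
      = ∑ i, ∑ j, d i * e j * ∑ k, ‖(Uᴴ * A k * V) i j‖ ^ 2 := by
  unfold FF Tcp
  rw [Finset.mul_sum, Matrix.trace_sum]
  have : ∀ k, ((U * Matrix.diagonal (fun i => (d i : ℂ)) * Uᴴ) *
      (A k * (V * Matrix.diagonal (fun i => (e i : ℂ)) * Vᴴ) * (A k)ᴴ)).trace
      = ((∑ i, ∑ j, d i * e j * ‖(Uᴴ * A k * V) i j‖ ^ 2 : ℝ) : ℂ) := by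
    intro k
    rw [← trace_diag]
    rw [mul_assoc U, mul_assoc U, Matrix.trace_mul_comm]
    simp only [Matrix.conjTranspose_mul, Matrix.conjTranspose_conjTranspose, mul_assoc]
  simp only [this]
  rw [← Complex.ofReal_sum, Complex.ofReal_re, Finset.sum_comm]
  refine Finset.sum_congr rfl fun i _ => ?_
  rw [Finset.sum_comm]
  refine Finset.sum_congr rfl fun j _ => ?_
  rw [Finset.mul_sum]

lemma FF_nonneg {m n : ℕ} (A : Fin m → Matrix (Fin n) (Fin n) ℂ)
    {P Q : Matrix (Fin n) (Fin n) ℂ} (hP : P.PosDef) (hQ : Q.PosDef) : 0 ≤ FF A P Q := by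
  obtain ⟨U, hU, hPU⟩ := spectral' hP.1
  obtain ⟨V, hV, hQV⟩ := spectral' hQ.1
  rw [hPU, hQV, FF_expand]
  have hd := hP.eigenvalues_pos
  have he := hQ.eigenvalues_pos
  refine Finset.sum_nonneg fun i _ => Finset.sum_nonneg fun j _ => ?_
  have := hd i; have := he j
  positivity

lemma norm_det_eq {n : ℕ} {P : Matrix (Fin n) (Fin n) ℂ} (hP : P.PosSemidef) :
    ‖P.det‖ = ∏ i, hP.1.eigenvalues i := by
  rw [hP.1.det_eq_prod_eigenvalues, norm_prod]
  refine Finset.prod_congr rfl fun i _ => ?_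
  rw [RCLike.norm_ofReal, abs_of_nonneg (hP.eigenvalues_nonneg i)]

lemma FF_lower {m n : ℕ} (A : Fin m → Matrix (Fin n) (Fin n) ℂ) (hA : DimCond A) :
    ∃ c > (0 : ℝ), ∀ P Q : Matrix (Fin n) (Fin n) ℂ, P.PosDef → Q.PosDef →
      c * (‖P.det‖ * ‖Q.det‖) ≤ FF A P Q ^ n := by
  obtain ⟨c, hc, H⟩ := unif_bound A hA
  have hfac : (0 : ℝ) < (Fintype.card (Equiv.Perm (Fin n)) : ℝ) := by
    exact_mod_cast Fintype.card_pos
  refine ⟨c / Fintype.card (Equiv.Perm (Fin n)), by positivity, ?_⟩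
  intro P Q hP hQ
  rw [div_mul_eq_mul_div, div_le_iff₀ hfac]
  rw [norm_det_eq hP.posSemidef, norm_det_eq hQ.posSemidef]
  obtain ⟨U, hU, hPU⟩ := spectral' hP.1
  obtain ⟨V, hV, hQV⟩ := spectral' hQ.1
  have hF := (congrArg₂ (FF A) hPU hQV).trans (FF_expand A U V _ _)
  have hd := hP.eigenvalues_pos
  have he := hQ.eigenvalues_pos
  have h := H U hU V hV
  set d := hP.1.eigenvalues
  set e := hQ.1.eigenvalues
  set b : Fin n → Fin n → ℝ := fun i j => ∑ k, ‖(Uᴴ * A k * V) i j‖ ^ 2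
  have hb : ∀ i j, 0 ≤ b i j := fun i j => by positivity
  have hterm : ∀ i j, 0 ≤ d i * e j * b i j := fun i j => by
    have := hd i; have := he j; have := hb i j; positivity
  have hle : ∀ i j, d i * e j * b i j ≤ FF A P Q := by
    intro i j
    rw [hF]
    calc _ ≤ ∑ j, d i * e j * b i j :=
          Finset.single_le_sum (f := fun j => d i * e j * b i j) (fun j _ => hterm i j) (Finset.mem_univ j)
      _ ≤ _ := Finset.single_le_sum (f := fun i => ∑ j, d i * e j * b i j)
          (fun i _ => Finset.sum_nonneg fun j _ => hterm i j) (Finset.mem_univ i)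
  have hde : 0 ≤ (∏ i, d i) * ∏ i, e i :=
    mul_nonneg (Finset.prod_nonneg fun i _ => (hd i).le) (Finset.prod_nonneg fun i _ => (he i).le)
  calc c * ((∏ i, d i) * ∏ i, e i)
      ≤ (∑ σ : Equiv.Perm (Fin n), ∏ j, b (σ j) j) * ((∏ i, d i) * ∏ i, e i) :=
        mul_le_mul_of_nonneg_right h hde
    _ = ∑ σ : Equiv.Perm (Fin n), ∏ j, (d (σ j) * e j * b (σ j) j) := by
        rw [Finset.sum_mul]
        refine Finset.sum_congr rfl fun σ _ => ?_
        rw [Finset.prod_mul_distrib, Finset.prod_mul_distrib, Equiv.prod_comp σ d]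
        ring
    _ ≤ ∑ σ : Equiv.Perm (Fin n), FF A P Q ^ n := by
        refine Finset.sum_le_sum fun σ _ => ?_
        refine (Finset.prod_le_prod (fun j _ => hterm _ _) (fun j _ => hle (σ j) j)).trans ?_
        simp
    _ = _ := by rw [Finset.sum_const, nsmul_eq_mul, Finset.card_univ, mul_comm]

lemma frobSq_eq_trace {n : ℕ} (X : Matrix (Fin n) (Fin n) ℂ) :
    ((frobSq X : ℝ) : ℂ) = (X * Xᴴ).trace := by
  unfold frobSq
  simp only [Matrix.trace, Matrix.diag, Matrix.mul_apply, Matrix.conjTranspose_apply]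
  push_cast
  refine Finset.sum_congr rfl fun i _ => Finset.sum_congr rfl fun j _ => ?_
  exact (Complex.mul_conj' _).symm

lemma frobSq_sub_one {n : ℕ} {M : Matrix (Fin n) (Fin n) ℂ} (hM : M.IsHermitian) :
    frobSq (M - 1) = ∑ i, (hM.eigenvalues i - 1) ^ 2 := by
  obtain ⟨U, hU, hMU⟩ := spectral' hM
  have h1 : U * Uᴴ = 1 := Matrix.mem_unitaryGroup_iff.1 hU
  have h2 : Uᴴ * U = 1 := Matrix.mem_unitaryGroup_iff'.1 hU
  set d := hM.eigenvalues
  have h3 : M - 1 = U * Matrix.diagonal (fun i => ((d i - 1 : ℝ) : ℂ)) * Uᴴ := by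
    have : Matrix.diagonal (fun i => ((d i - 1 : ℝ) : ℂ))
        = Matrix.diagonal (fun i => (d i : ℂ)) - 1 := by
      rw [← Matrix.diagonal_one, Matrix.diagonal_sub]; simp
    rw [this, mul_sub, sub_mul, ← hMU, mul_one, h1]
  have h4 : (M - 1)ᴴ = M - 1 := by
    rw [Matrix.conjTranspose_sub, hM.eq, Matrix.conjTranspose_one]
  have : ((frobSq (M - 1) : ℝ) : ℂ) = ((∑ i, (d i - 1) ^ 2 : ℝ) : ℂ) := by
    rw [frobSq_eq_trace, h4, h3]
    have : U * Matrix.diagonal (fun i => ((d i - 1 : ℝ) : ℂ)) * Uᴴ *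
        (U * Matrix.diagonal (fun i => ((d i - 1 : ℝ) : ℂ)) * Uᴴ)
        = U * (Matrix.diagonal (fun i => ((d i - 1 : ℝ) : ℂ)) * (Uᴴ * U) *
          Matrix.diagonal (fun i => ((d i - 1 : ℝ) : ℂ)) * Uᴴ) := by
      simp only [mul_assoc]
    rw [this, h2, mul_one, Matrix.trace_mul_comm, mul_assoc, h2, mul_one,
      Matrix.diagonal_mul_diagonal, Matrix.trace_diagonal]
    push_cast
    refine Finset.sum_congr rfl fun i _ => by ring
  exact_mod_cast this

lemma amgm_stab (n : ℕ) (ε : ℝ) (hε : 0 < ε) : ∃ p < (1 : ℝ), ∀ x : Fin n → ℝ,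
    (∀ i, 0 ≤ x i) → ∑ i, x i = n → p < ∏ i, x i → ∑ i, (x i - 1) ^ 2 < ε := by
  let K : Set (Fin n → ℝ) := (Set.pi Set.univ fun _ => Set.Icc 0 (n : ℝ)) ∩
    {x | ∑ i, x i = n ∧ ε ≤ ∑ i, (x i - 1) ^ 2}
  have hK : IsCompact K := by
    refine (isCompact_univ_pi fun _ => isCompact_Icc).inter_right ?_
    have c1 : Continuous fun x : Fin n → ℝ => ∑ i, x i := by fun_prop
    have c2 : Continuous fun x : Fin n → ℝ => ∑ i, (x i - 1) ^ 2 := by fun_prop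
    exact (isClosed_eq c1 continuous_const).inter (isClosed_le continuous_const c2)
  have hlt : ∀ x ∈ K, ∏ i, x i < 1 := by
    rintro x ⟨hx, hs, hx2⟩
    have hx0 : ∀ i, 0 ≤ x i := fun i => (hx i trivial).1
    by_cases hz : ∃ i, x i = 0
    · obtain ⟨i, hi⟩ := hz
      rw [Finset.prod_eq_zero (Finset.mem_univ i) hi]; exact one_pos
    · push Not at hz
      have hne : ∃ i, x i ≠ 1 := by
        by_contra hcon
        push Not at hcon
        simp [hcon] at hx2
        linarith
      obtain ⟨i, hi⟩ := hne
      have hexp : ∏ i, Real.exp (x i - 1) = 1 := by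
        rw [← Real.exp_sum, Finset.sum_sub_distrib, hs]; simp
      rw [← hexp]
      refine Finset.prod_lt_prod (fun i _ => lt_of_le_of_ne (hx0 i) (hz i).symm)
        (fun i _ => ?_) ⟨i, Finset.mem_univ _, ?_⟩
      · linarith [Real.add_one_le_exp (x i - 1)]
      · linarith [Real.add_one_lt_exp (x := x i - 1) (sub_ne_zero.2 hi)]
  have hmem : ∀ x : Fin n → ℝ, (∀ i, 0 ≤ x i) → ∑ i, x i = n → ε ≤ ∑ i, (x i - 1) ^ 2 → x ∈ K := by
    intro x h0 hs h2
    refine ⟨fun i _ => ⟨h0 i, ?_⟩, hs, h2⟩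
    rw [← hs]
    exact Finset.single_le_sum (fun i _ => h0 i) (Finset.mem_univ i)
  rcases K.eq_empty_or_nonempty with hE | hE
  · refine ⟨0, one_pos, fun x h0 hs _ => ?_⟩
    by_contra hcon
    have := hmem x h0 hs (not_lt.1 hcon)
    rw [hE] at this; exact this
  · obtain ⟨y, hy, hmax⟩ := hK.exists_isMaxOn hE (f := fun x => ∏ i, x i)
      (Continuous.continuousOn (by fun_prop))
    refine ⟨∏ i, y i, hlt y hy, fun x h0 hs hp => ?_⟩
    by_contra hcon
    have := hmax (hmem x h0 hs (not_lt.1 hcon))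
    exact absurd hp (not_lt.2 this)

lemma near_one (n : ℕ) (ε : ℝ) (hε : 0 < ε) : ∃ p < (1 : ℝ), ∀ M : Matrix (Fin n) (Fin n) ℂ,
    M.PosSemidef → M.trace.re = n → p < ‖M.det‖ → frobSq (M - 1) < ε := by
  obtain ⟨p, hp, H⟩ := amgm_stab n ε hε
  refine ⟨p, hp, fun M hM ht hd => ?_⟩
  rw [frobSq_sub_one hM.1]
  refine H _ hM.eigenvalues_nonneg ?_ ?_
  · rw [hM.1.trace_eq_sum_eigenvalues] at ht
    simpa using ht
  · rwa [← norm_det_eq hM]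

lemma Tcp_psd {m n : ℕ} (B : Fin m → Matrix (Fin n) (Fin n) ℂ) : (Tcp B 1).PosSemidef := by
  unfold Tcp
  refine Matrix.posSemidef_sum _ fun k _ => ?_
  rw [mul_one]
  exact Matrix.posSemidef_self_mul_conjTranspose _

lemma det_lower {m n : ℕ} (B : Fin m → Matrix (Fin n) (Fin n) ℂ) (K : ℝ)
    (hK : ∀ P : Matrix (Fin n) (Fin n) ℂ, P.PosDef → K * ‖P.det‖ ≤ FF B P 1 ^ n) :
    K ≤ (n : ℝ) ^ n * ‖(Tcp B 1).det‖ := by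
  set M := Tcp B 1 with hMdef
  have hM : M.PosSemidef := Tcp_psd B
  have key : ∀ η : ℝ, 0 < η → K ≤ (n : ℝ) ^ n * ‖(M + (η : ℂ) • (1 : Matrix (Fin n) (Fin n) ℂ)).det‖ := by
    intro η hη
    have hη' : (0 : ℂ) < (η : ℂ) := by exact_mod_cast hη
    have hN : (M + (η : ℂ) • (1 : Matrix (Fin n) (Fin n) ℂ)).PosDef :=
      Matrix.PosDef.posSemidef_add hM (Matrix.PosDef.one.smul hη')
    set N := M + (η : ℂ) • (1 : Matrix (Fin n) (Fin n) ℂ) with hNdef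
    have hdet : N.det ≠ 0 := hN.det_pos.ne'
    have h1 := hK N⁻¹ hN.inv
    have h2 : FF B N⁻¹ 1 ≤ n := by
      unfold FF
      rw [← hMdef]
      have : M = N - (η : ℂ) • (1 : Matrix (Fin n) (Fin n) ℂ) := by rw [hNdef]; simp
      rw [this, mul_sub, Matrix.nonsing_inv_mul _ (isUnit_iff_ne_zero.2 hdet), Matrix.trace_sub,
        Matrix.trace_one, mul_smul_comm, mul_one, Matrix.trace_smul]
      have h3 : 0 ≤ N⁻¹.trace := hN.inv.posSemidef.trace_nonneg
      have h4 : 0 ≤ N⁻¹.trace.re := (Complex.le_def.1 h3).1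
      simp
      positivity
    have h3 := FF_nonneg B hN.inv Matrix.PosDef.one
    have h4 := h1.trans (pow_le_pow_left₀ h3 h2 n)
    rw [Matrix.det_nonsing_inv, Ring.inverse_eq_inv', norm_inv, ← div_eq_mul_inv,
      div_le_iff₀ (norm_pos_iff.2 hdet)] at h4
    exact h4
  have hcont : Continuous fun η : ℝ =>
      (n : ℝ) ^ n * ‖(M + (η : ℂ) • (1 : Matrix (Fin n) (Fin n) ℂ)).det‖ := by
    have : Continuous fun η : ℝ => (M + (η : ℂ) • (1 : Matrix (Fin n) (Fin n) ℂ)) := by fun_prop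
    exact continuous_const.mul (this.matrix_det.norm)
  have ht : Filter.Tendsto (fun η : ℝ =>
      (n : ℝ) ^ n * ‖(M + (η : ℂ) • (1 : Matrix (Fin n) (Fin n) ℂ)).det‖) (nhdsWithin 0 (Set.Ioi 0))
      (nhds ((n : ℝ) ^ n * ‖M.det‖)) := by
    have := (hcont.tendsto 0).mono_left (nhdsWithin_le_nhds (s := Set.Ioi (0 : ℝ)))
    simpa using this
  exact ge_of_tendsto ht (Filter.eventually_of_mem self_mem_nhdsWithin key)

lemma exists_sqrt {n : ℕ} {P : Matrix (Fin n) (Fin n) ℂ} (hP : P.PosDef) :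
    ∃ g : GL (Fin n) ℂ, P = (g : Matrix (Fin n) (Fin n) ℂ) * (g : Matrix (Fin n) (Fin n) ℂ)ᴴ := by
  obtain ⟨U, hU, hPU⟩ := spectral' hP.1
  have hd := hP.eigenvalues_pos
  set d := hP.1.eigenvalues
  let g := U * Matrix.diagonal (fun i => ((Real.sqrt (d i) : ℝ) : ℂ))
  have hg : P = g * gᴴ := by
    rw [hPU]
    simp only [g, Matrix.conjTranspose_mul, Matrix.diagonal_conjTranspose]
    have : Matrix.diagonal (fun i => (d i : ℂ)) = Matrix.diagonal (fun i => ((Real.sqrt (d i) : ℝ) : ℂ))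
        * Matrix.diagonal (star fun i => ((Real.sqrt (d i) : ℝ) : ℂ)) := by
      rw [Matrix.diagonal_mul_diagonal]
      congr 1
      ext i
      simp only [Pi.star_apply, RCLike.star_def, Complex.conj_ofReal]
      rw [← Complex.ofReal_mul, Real.mul_self_sqrt (hd i).le]
    rw [this]
    simp only [mul_assoc]
  have hdet : g.det ≠ 0 := by
    intro h0
    have := hP.det_pos.ne'
    rw [hg, Matrix.det_mul, h0, zero_mul] at this
    exact this rfl
  exact ⟨Matrix.GeneralLinearGroup.mkOfDetNeZero g hdet, hg⟩

lemma FF_conj {m n : ℕ} (A : Fin m → Matrix (Fin n) (Fin n) ℂ)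
    (g h R S : Matrix (Fin n) (Fin n) ℂ) :
    FF (fun k => gᴴ * A k * h) R S = FF A (g * R * gᴴ) (h * S * hᴴ) := by
  unfold FF Tcp
  rw [Finset.mul_sum, Finset.mul_sum, Matrix.trace_sum, Matrix.trace_sum]
  congr 1
  refine Finset.sum_congr rfl fun k _ => ?_
  rw [mul_assoc g, mul_assoc g, Matrix.trace_mul_comm g]
  simp only [Matrix.conjTranspose_mul, Matrix.conjTranspose_conjTranspose, mul_assoc]

lemma FF_star {m n : ℕ} (A : Fin m → Matrix (Fin n) (Fin n) ℂ)
    (R S : Matrix (Fin n) (Fin n) ℂ) :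
    FF (fun k => (A k)ᴴ) R S = FF A S R := by
  unfold FF Tcp
  rw [Finset.mul_sum, Finset.mul_sum, Matrix.trace_sum, Matrix.trace_sum]
  congr 1
  refine Finset.sum_congr rfl fun k _ => ?_
  rw [Matrix.conjTranspose_conjTranspose]
  have e1 : R * ((A k)ᴴ * S * A k) = (R * (A k)ᴴ) * (S * A k) := by simp only [mul_assoc]
  have e2 : S * (A k * R * (A k)ᴴ) = (S * A k) * (R * (A k)ᴴ) := by simp only [mul_assoc]
  rw [e1, e2, Matrix.trace_mul_comm]

lemma posDef_conj {n : ℕ} (g : GL (Fin n) ℂ) {P : Matrix (Fin n) (Fin n) ℂ} (hP : P.PosDef) :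
    ((g : Matrix (Fin n) (Fin n) ℂ) * P * (g : Matrix (Fin n) (Fin n) ℂ)ᴴ).PosDef := by
  refine hP.mul_mul_conjTranspose_same ?_
  exact Matrix.vecMul_injective_of_isUnit g.isUnit

lemma scalable_of_dimCond {m n : ℕ} (A : Fin m → Matrix (Fin n) (Fin n) ℂ) (hA : DimCond A)
    (ε : ℝ) (hε : 0 < ε) : ∃ g h : GL (Fin n) ℂ,
        frobSq (Tcp (fun k => (↑g)ᴴ * A k * (↑h : Matrix (Fin n) (Fin n) ℂ)) 1 - 1)
          + frobSq (TcpStar (fun k => (↑g)ᴴ * A k * (↑h : Matrix (Fin n) (Fin n) ℂ)) 1 - 1)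
          < ε ^ 2 := by
  rcases Nat.eq_zero_or_pos n with rfl | hn
  · exact ⟨1, 1, by simp [frobSq]; positivity⟩
  have hn' : (0 : ℝ) < n := by exact_mod_cast hn
  obtain ⟨c₀, hc₀, H₀⟩ := FF_lower A hA
  have hdp : ∀ P : Matrix (Fin n) (Fin n) ℂ, P.PosDef → 0 < ‖P.det‖ := fun P hP =>
    norm_pos_iff.2 hP.det_pos.ne'
  let S : Set ℝ := {t | ∃ P Q : Matrix (Fin n) (Fin n) ℂ, P.PosDef ∧ Q.PosDef ∧
    t = FF A P Q ^ n / (‖P.det‖ * ‖Q.det‖)}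
  have hSlb : ∀ t ∈ S, c₀ ≤ t := by
    rintro t ⟨P, Q, hP, hQ, rfl⟩
    rw [le_div_iff₀ (mul_pos (hdp P hP) (hdp Q hQ))]
    exact H₀ P Q hP hQ
  have hSne : S.Nonempty := ⟨_, 1, 1, Matrix.PosDef.one, Matrix.PosDef.one, rfl⟩
  have hSb : BddBelow S := ⟨c₀, hSlb⟩
  set c := sInf S with hcdef
  have hc : 0 < c := lt_of_lt_of_le hc₀ (le_csInf hSne hSlb)
  have H : ∀ P Q : Matrix (Fin n) (Fin n) ℂ, P.PosDef → Q.PosDef →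
      c * (‖P.det‖ * ‖Q.det‖) ≤ FF A P Q ^ n := by
    intro P Q hP hQ
    rw [← le_div_iff₀ (mul_pos (hdp P hP) (hdp Q hQ))]
    exact csInf_le hSb ⟨P, Q, hP, hQ, rfl⟩
  obtain ⟨p', hp', Hp'⟩ := near_one n (ε ^ 2 / 2) (by positivity)
  obtain ⟨p, hp, hp0, Hp⟩ : ∃ p < (1 : ℝ), 0 < p ∧ ∀ M : Matrix (Fin n) (Fin n) ℂ,
      M.PosSemidef → M.trace.re = n → p < ‖M.det‖ → frobSq (M - 1) < ε ^ 2 / 2 :=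
    ⟨max p' (1 / 2), max_lt hp' (by norm_num), lt_max_of_lt_right (by norm_num),
      fun M h1 h2 h3 => Hp' M h1 h2 ((le_max_left _ _).trans_lt h3)⟩
  obtain ⟨t, ⟨P₀, Q, hP₀, hQ, rfl⟩, ht⟩ := exists_lt_of_csInf_lt hSne
    (show sInf S < c / p by rw [← hcdef, lt_div_iff₀ hp0]; nlinarith)
  rw [div_lt_div_iff₀ (mul_pos (hdp _ hP₀) (hdp Q hQ)) hp0] at ht
  have hF0 : 0 < FF A P₀ Q := by
    have h1 := H P₀ Q hP₀ hQ
    have h2 := mul_pos hc (mul_pos (hdp _ hP₀) (hdp Q hQ))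
    refine lt_of_le_of_ne (FF_nonneg A hP₀ hQ) fun h0 => ?_
    rw [← h0, zero_pow hn.ne'] at h1
    linarith
  -- rescale
  let s : ℝ := n / FF A P₀ Q
  have hs : 0 < s := by positivity
  let P := (s : ℂ) • P₀
  have hP : P.PosDef := hP₀.smul (by exact_mod_cast hs)
  have hFP : FF A P Q = n := by
    have : FF A P Q = s * FF A P₀ Q := by
      simp [FF, P]
    rw [this]; simp only [s]; field_simp
  have hPQ : (n : ℝ) ^ n * p < c * (‖P.det‖ * ‖Q.det‖) := by
    have h1 : ‖P.det‖ = s ^ n * ‖P₀.det‖ := by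
      simp only [P, Matrix.det_smul, Fintype.card_fin, norm_mul, norm_pow, Complex.norm_real,
        Real.norm_eq_abs, abs_of_pos hs]
    have h2 : (n : ℝ) ^ n = s ^ n * FF A P₀ Q ^ n := by
      rw [← mul_pow]; simp only [s]; field_simp
    rw [h1, h2]
    have := mul_lt_mul_of_pos_left ht (pow_pos hs n)
    nlinarith
  obtain ⟨g, hg⟩ := exists_sqrt hP
  obtain ⟨h, hh⟩ := exists_sqrt hQ
  refine ⟨g, h, ?_⟩
  set B : Fin m → Matrix (Fin n) (Fin n) ℂ :=
    fun k => (g : Matrix (Fin n) (Fin n) ℂ)ᴴ * A k * (h : Matrix (Fin n) (Fin n) ℂ) with hB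
  have hT : TcpStar B 1 = Tcp (fun k => (B k)ᴴ) 1 := by simp [Tcp, TcpStar]
  have hgdet : ‖P.det‖ = ‖(g : Matrix (Fin n) (Fin n) ℂ).det‖ * ‖((g : Matrix (Fin n) (Fin n) ℂ)ᴴ).det‖ := by
    rw [hg, Matrix.det_mul, norm_mul]
  have hhdet : ‖Q.det‖ = ‖(h : Matrix (Fin n) (Fin n) ℂ).det‖ * ‖((h : Matrix (Fin n) (Fin n) ℂ)ᴴ).det‖ := by
    rw [hh, Matrix.det_mul, norm_mul]
  have hB11 : FF B 1 1 = n := by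
    rw [hB, FF_conj, mul_one, mul_one, ← hg, ← hh, hFP]
  have t1 : (Tcp B 1).trace.re = n := by
    rw [← hB11]; simp [FF]
  have t2 : (Tcp (fun k => (B k)ᴴ) 1).trace.re = n := by
    rw [← hB11, ← FF_star]; simp [FF]
  have d1 : c * (‖P.det‖ * ‖Q.det‖) ≤ (n : ℝ) ^ n * ‖(Tcp B 1).det‖ := by
    refine det_lower B _ fun R hR => ?_
    have := H _ _ (posDef_conj g hR) hQ
    rw [hB, FF_conj, mul_one, ← hh]
    refine le_trans (le_of_eq ?_) this
    rw [Matrix.det_mul, Matrix.det_mul, norm_mul, norm_mul, hgdet]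
    ring
  have d2 : c * (‖P.det‖ * ‖Q.det‖) ≤ (n : ℝ) ^ n * ‖(Tcp (fun k => (B k)ᴴ) 1).det‖ := by
    refine det_lower _ _ fun R hR => ?_
    have := H _ _ hP (posDef_conj h hR)
    rw [FF_star, hB, FF_conj, mul_one, ← hg]
    refine le_trans (le_of_eq ?_) this
    rw [Matrix.det_mul, Matrix.det_mul, norm_mul, norm_mul, hhdet]
    ring
  have hnn : (0 : ℝ) < (n : ℝ) ^ n := pow_pos hn' n
  have f1 := Hp _ (Tcp_psd B) t1 (lt_of_mul_lt_mul_left (hPQ.trans_le d1) hnn.le)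
  have f2 := Hp _ (Tcp_psd _) t2 (lt_of_mul_lt_mul_left (hPQ.trans_le d2) hnn.le)
  rw [hT]
  linarith

/-- `𝒜` is scalable iff `dim 𝒜U ≥ dim U` for every subspace `U ≤ ℂⁿ`. -/
theorem scalable_iff_dim_condition {m n : ℕ} (A : Fin m → Matrix (Fin n) (Fin n) ℂ) :
    (∀ ε > (0 : ℝ), ∃ g h : GL (Fin n) ℂ,
        frobSq (Tcp (fun k => (↑g)ᴴ * A k * (↑h : Matrix (Fin n) (Fin n) ℂ)) 1 - 1)
          + frobSq (TcpStar (fun k => (↑g)ᴴ * A k * (↑h : Matrix (Fin n) (Fin n) ℂ)) 1 - 1)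
          < ε ^ 2)
      ↔ ∀ U : Submodule ℂ (Fin n → ℂ),
          Module.finrank ℂ U ≤ Module.finrank ℂ (ASpan A U) := by
  constructor
  · intro hS
    obtain ⟨g, h, hgh⟩ := hS (1 / (2 * n + 1) : ℝ) (by positivity)
    have hB := near_ds_dimCond _ hgh
    have key := dimCond_scale _ (((g⁻¹ : GL (Fin n) ℂ) : Matrix (Fin n) (Fin n) ℂ)ᴴ)
      ((g : Matrix (Fin n) (Fin n) ℂ)ᴴ) ((h⁻¹ : GL (Fin n) ℂ) : Matrix (Fin n) (Fin n) ℂ)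
      (h : Matrix (Fin n) (Fin n) ℂ)
      (by rw [← Matrix.conjTranspose_mul, ← Units.val_mul, inv_mul_cancel, Units.val_one,
        Matrix.conjTranspose_one])
      (by rw [← Units.val_mul, mul_inv_cancel, Units.val_one]) hB
    have e : (fun k => (((g⁻¹ : GL (Fin n) ℂ) : Matrix (Fin n) (Fin n) ℂ)ᴴ) *
        ((g : Matrix (Fin n) (Fin n) ℂ)ᴴ * A k * (h : Matrix (Fin n) (Fin n) ℂ)) *
        ((h⁻¹ : GL (Fin n) ℂ) : Matrix (Fin n) (Fin n) ℂ)) = A := by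
      funext k
      have e1 : (((g⁻¹ : GL (Fin n) ℂ) : Matrix (Fin n) (Fin n) ℂ)ᴴ) *
          (g : Matrix (Fin n) (Fin n) ℂ)ᴴ = 1 := by
        rw [← Matrix.conjTranspose_mul, ← Units.val_mul, mul_inv_cancel, Units.val_one,
          Matrix.conjTranspose_one]
      have e2 : (h : Matrix (Fin n) (Fin n) ℂ) *
          ((h⁻¹ : GL (Fin n) ℂ) : Matrix (Fin n) (Fin n) ℂ) = 1 := by
        rw [← Units.val_mul, mul_inv_cancel, Units.val_one]
      rw [← mul_assoc, ← mul_assoc, e1, one_mul, mul_assoc, e2, mul_one]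
    rw [e] at key
    exact key
  · intro hA ε hε
    exact scalable_of_dimCond A hA ε hε
end
end

section
/- Let v be a norm on ℝ^n invariant under coordinate permutations, and let v* be its dual norm on ℝ^n. Then the dual norm of ‖·‖_v on the space of n×n Hermitian matrices (with respect to the trace pairing (H,X) ↦ tr(HX)) equals ‖·‖_{v*}; that is, for every Hermitian H, max{ tr(HX) : X Hermitian, ‖X‖_v ≤ 1 } = v*(λ(H)). -/
noncomputable section
open scoped Classical
open Matrix

theorem aux_trace {n : ℕ} (U V : Matrix (Fin n) (Fin n) ℂ) (a b : Fin n → ℝ) :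
    (Matrix.trace ((U * diagonal (fun i => (a i : ℂ)) * star U) *
      (V * diagonal (fun i => (b i : ℂ)) * star V))).re =
    ∑ i, a i * ∑ j, Complex.normSq ((star U * V) i j) * b j := by
  have h : Matrix.trace ((U * diagonal (fun i => (a i : ℂ)) * star U) *
      (V * diagonal (fun i => (b i : ℂ)) * star V)) =
      Matrix.trace (diagonal (fun i => (a i : ℂ)) * ((star U * V) *
        diagonal (fun i => (b i : ℂ)) * star (star U * V))) := by
    rw [star_mul, star_star]
    simp only [Matrix.mul_assoc]
    rw [Matrix.trace_mul_comm]
    simp only [Matrix.mul_assoc]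
  rw [h]
  generalize star U * V = W
  simp only [Matrix.trace, Matrix.diag, Matrix.diagonal_mul, Complex.re_sum, Complex.re_ofReal_mul]
  refine Finset.sum_congr rfl fun i _ => ?_
  congr 1
  rw [Matrix.mul_apply, Complex.re_sum]
  refine Finset.sum_congr rfl fun j _ => ?_
  rw [Matrix.mul_diagonal, Matrix.star_apply]
  simp [Complex.normSq_apply]
  ring

theorem aux_ds {n : ℕ} (W : Matrix (Fin n) (Fin n) ℂ) (h1 : W * star W = 1) (h2 : star W * W = 1) :
    (Matrix.of fun i j => Complex.normSq (W i j)) ∈ doublyStochastic ℝ (Fin n) := by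
  rw [mem_doublyStochastic_iff_sum]
  refine ⟨fun i j => Complex.normSq_nonneg _, fun i => ?_, fun j => ?_⟩
  · have := congrArg Complex.re (congrFun (congrFun h1 i) i)
    rw [Matrix.mul_apply, Complex.re_sum] at this
    simpa [Complex.normSq_apply] using this
  · have := congrArg Complex.re (congrFun (congrFun h2 j) j)
    rw [Matrix.mul_apply, Complex.re_sum] at this
    simpa [Complex.normSq_apply] using this

theorem aux_v {n : ℕ} (v : (Fin n → ℝ) → ℝ)
    (hv_smul : ∀ (c : ℝ) (x : Fin n → ℝ), v (c • x) = |c| * v x)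
    (hv_add : ∀ x y, v (x + y) ≤ v x + v y)
    (hv_perm : ∀ (σ : Equiv.Perm (Fin n)) (x : Fin n → ℝ), v (x ∘ σ) = v x)
    (M : Matrix (Fin n) (Fin n) ℝ) (hM : M ∈ doublyStochastic ℝ (Fin n)) (b : Fin n → ℝ)
    (hb : v b ≤ 1) : v (M *ᵥ b) ≤ 1 := by
  have hM' : M ∈ (doublyStochastic ℝ (Fin n) : Set (Matrix (Fin n) (Fin n) ℝ)) := hM
  rw [doublyStochastic_eq_convexHull_permMatrix] at hM'
  have hc : Convex ℝ {M : Matrix (Fin n) (Fin n) ℝ | v (M *ᵥ b) ≤ 1} := by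
    intro A hA B hB s t hs ht hst
    simp only [Set.mem_ofPred_eq] at hA hB ⊢
    rw [Matrix.add_mulVec, Matrix.smul_mulVec, Matrix.smul_mulVec]
    refine (hv_add _ _).trans ?_
    rw [hv_smul, hv_smul, abs_of_nonneg hs, abs_of_nonneg ht]
    nlinarith
  refine convexHull_min ?_ hc hM'
  rintro _ ⟨σ, rfl⟩
  simp only [Set.mem_ofPred_eq]
  rw [Matrix.permMatrix_mulVec, hv_perm]
  exact hb

theorem aux_perm {n : ℕ} (x y : Fin n → ℝ)
    (h : Multiset.map x Finset.univ.val = Multiset.map y Finset.univ.val) :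
    ∃ σ : Equiv.Perm (Fin n), x = y ∘ σ := by
  have hp : (List.ofFn x).Perm (List.ofFn y) := by
    rw [Fin.univ_val_map, Fin.univ_val_map] at h
    exact Multiset.coe_eq_coe.1 h
  have hs : x ∘ Tuple.sort x = y ∘ Tuple.sort y := by
    apply List.ofFn_injective
    exact (((Tuple.sort x).ofFn_comp_perm x).trans
      (hp.trans ((Tuple.sort y).ofFn_comp_perm y).symm)).eq_of_pairwise'
      (Tuple.monotone_sort x).sortedLE_ofFn.pairwise (Tuple.monotone_sort y).sortedLE_ofFn.pairwise
  refine ⟨(Tuple.sort x).symm.trans (Tuple.sort y), ?_⟩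
  ext i
  have := congrFun hs ((Tuple.sort x).symm i)
  simpa using this

theorem aux_spec {n : ℕ} {H : Matrix (Fin n) (Fin n) ℂ} (hH : H.IsHermitian) :
    H = (hH.eigenvectorUnitary : Matrix (Fin n) (Fin n) ℂ) *
      diagonal (fun i => (hH.eigenvalues i : ℂ)) *
      star (hH.eigenvectorUnitary : Matrix (Fin n) (Fin n) ℂ) := by
  have h := hH.spectral_theorem
  rw [Unitary.conjStarAlgAut_apply] at h
  exact h

theorem aux_eig {n : ℕ} (U : Matrix (Fin n) (Fin n) ℂ) (hU : star U * U = 1) (y : Fin n → ℝ)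
    (hX : (U * diagonal (fun i => (y i : ℂ)) * star U).IsHermitian) :
    ∃ σ : Equiv.Perm (Fin n), hX.eigenvalues = y ∘ σ := by
  apply aux_perm
  have h := hX.roots_charpoly_eq_eigenvalues
  rw [charpoly_mul_comm, ← Matrix.mul_assoc, hU, Matrix.one_mul, charpoly_diagonal,
    Polynomial.roots_prod _ _
      (by simp [Finset.prod_ne_zero_iff, Polynomial.X_sub_C_ne_zero])] at h
  simp only [Polynomial.roots_X_sub_C, Multiset.bind_singleton] at h
  have := congrArg (Multiset.map Complex.re) h
  simpa [Multiset.map_map, Function.comp_def] using this.symm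

/-- The dual norm of `‖·‖_v` on Hermitian matrices (w.r.t. the trace pairing) is
`‖·‖_{v*}`: for Hermitian `H`, `max { tr(HX) : X Hermitian, ‖X‖_v ≤ 1 } = v*(λ(H))`. -/
theorem dual_norm_hermitian {n : ℕ} (v : (Fin n → ℝ) → ℝ)
    (hv_eq0 : ∀ x, v x = 0 ↔ x = 0)
    (hv_smul : ∀ (c : ℝ) (x : Fin n → ℝ), v (c • x) = |c| * v x)
    (hv_add : ∀ x y, v (x + y) ≤ v x + v y)
    (hv_perm : ∀ (σ : Equiv.Perm (Fin n)) (x : Fin n → ℝ), v (x ∘ σ) = v x)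
    (vs : (Fin n → ℝ) → ℝ)
    (hvs : ∀ x, IsGreatest {r : ℝ | ∃ y : Fin n → ℝ, v y ≤ 1 ∧ r = ∑ i, x i * y i} (vs x)) :
    ∀ (H : Matrix (Fin n) (Fin n) ℂ) (hH : H.IsHermitian),
      IsGreatest
        {r : ℝ | ∃ (X : Matrix (Fin n) (Fin n) ℂ) (hX : X.IsHermitian),
          v hX.eigenvalues ≤ 1 ∧ r = (Matrix.trace (H * X)).re}
        (vs hH.eigenvalues) := by
  intro H hH
  have hU1 : star (hH.eigenvectorUnitary : Matrix (Fin n) (Fin n) ℂ) *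
      (hH.eigenvectorUnitary : Matrix (Fin n) (Fin n) ℂ) = 1 :=
    Unitary.coe_star_mul_self _
  have hU2 : (hH.eigenvectorUnitary : Matrix (Fin n) (Fin n) ℂ) *
      star (hH.eigenvectorUnitary : Matrix (Fin n) (Fin n) ℂ) = 1 :=
    Unitary.coe_mul_star_self _
  have hHs := aux_spec hH
  generalize hH.eigenvalues = a at *
  generalize (hH.eigenvectorUnitary : Matrix (Fin n) (Fin n) ℂ) = U at *
  constructor
  · obtain ⟨y, hy, hr⟩ := (hvs a).1
    have hX : (U * diagonal (fun i => (y i : ℂ)) * star U).IsHermitian := by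
      have hd : (diagonal (fun i => (y i : ℂ))).IsHermitian := by
        apply Matrix.isHermitian_diagonal_of_self_adjoint
        ext i
        simp
      exact Matrix.isHermitian_mul_mul_conjTranspose U hd
    refine ⟨_, hX, ?_, ?_⟩
    · obtain ⟨σ, hσ⟩ := aux_eig U hU1 y hX
      rw [hσ, hv_perm]
      exact hy
    · rw [hr, hHs, aux_trace, hU1]
      refine Finset.sum_congr rfl fun i _ => ?_
      simp [Matrix.one_apply, apply_ite Complex.normSq]
  · rintro r ⟨X, hX, hXv, rfl⟩
    have hV1 : star (hX.eigenvectorUnitary : Matrix (Fin n) (Fin n) ℂ) *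
        (hX.eigenvectorUnitary : Matrix (Fin n) (Fin n) ℂ) = 1 :=
      Unitary.coe_star_mul_self _
    have hV2 : (hX.eigenvectorUnitary : Matrix (Fin n) (Fin n) ℂ) *
        star (hX.eigenvectorUnitary : Matrix (Fin n) (Fin n) ℂ) = 1 :=
      Unitary.coe_mul_star_self _
    have hXs := aux_spec hX
    generalize hX.eigenvalues = b at *
    generalize (hX.eigenvectorUnitary : Matrix (Fin n) (Fin n) ℂ) = V at *
    rw [hHs, hXs, aux_trace]
    have hds := aux_ds (star U * V)
      (by rw [star_mul, star_star, Matrix.mul_assoc, ← Matrix.mul_assoc V, hV2, Matrix.one_mul, hU1])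
      (by rw [star_mul, star_star, Matrix.mul_assoc, ← Matrix.mul_assoc U, hU2, Matrix.one_mul, hV1])
    exact (hvs a).2 ⟨_, aux_v v hv_smul hv_add hv_perm _ hds b hXv, rfl⟩
end
end
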